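/- arXiv:1403.7670 — 2 statements merged into one kernel-verified Lean document; each statement's English description precedes it below -/
import Mathlib

section
/- If G is a nontrivial square-complementary graph that is regular (all vertices have the same degree), then the diameter of G equals 3. -/
/-!
Call two distinct vertices far if they are nonadjacent in `G.square`, i.e. at distance at least 3.
An isomorphism `e : G.square ≃g Gᶜ` makes `x, y` far exactly when `e x, e y` are adjacent in `G`,
so in a `d`-regular graph every vertex is far from exactly `d` vertices. If `w` is far from `u`, the
closed neighbourhood of `w`, having `d + 1` elements, cannot consist of vertices far from `u`; hence
some neighbour of `w` is within distance 2 of `u`, and `u, w` are joined by a walk of length at most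
3 (`exists_walk_of_far`). A far pair therefore has distance exactly 3, and one exists because
`G` has an edge: for an edgeless `G` on at least two vertices, `Gᶜ` has edges while `G.square` has
none.
-/

open SimpleGraph

/-- The square of a simple graph: two distinct vertices are adjacent iff they are adjacent
in `G` or have a common neighbor in `G`. -/
def SimpleGraph.square {V : Type*} (G : SimpleGraph V) : SimpleGraph V :=
  SimpleGraph.fromRel (fun x y => G.Adj x y ∨ ∃ z, G.Adj x z ∧ G.Adj z y)

theorem square_adj_iff {V : Type*} (G : SimpleGraph V) (x y : V) :
    G.square.Adj x y ↔ x ≠ y ∧ (G.Adj x y ∨ ∃ z, G.Adj x z ∧ G.Adj z y) := by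
  unfold SimpleGraph.square
  rw [SimpleGraph.fromRel_adj]
  constructor
  · rintro ⟨h, h1 | h1 | ⟨z, h1, h2⟩⟩
    · exact ⟨h, h1⟩
    · exact ⟨h, Or.inl h1.symm⟩
    · exact ⟨h, Or.inr ⟨z, h2.symm, h1.symm⟩⟩
  · rintro ⟨h, h1⟩
    exact ⟨h, Or.inl h1⟩

theorem adj_iff_far {V : Type*} {G : SimpleGraph V} (e : G.square ≃g Gᶜ) (x y : V) :
    G.Adj (e x) (e y) ↔ x ≠ y ∧ ¬ G.square.Adj x y := by
  rw [← e.map_adj_iff, SimpleGraph.compl_adj, ← e.injective.ne_iff]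
  constructor
  · intro h
    exact ⟨h.ne, fun h' => h'.2 h⟩
  · rintro ⟨h1, h2⟩
    by_contra h
    exact h2 ⟨h1, h⟩

theorem exists_walk_of_square_adj {V : Type*} {G : SimpleGraph V} {u v : V}
    (h : G.square.Adj u v) : ∃ p : G.Walk u v, p.length ≤ 2 := by
  obtain ⟨-, h | ⟨z, h1, h2⟩⟩ := (square_adj_iff G u v).1 h
  · exact ⟨.cons h .nil, by simp⟩
  · exact ⟨.cons h1 (.cons h2 .nil), by simp⟩

theorem square_adj_of_walk {V : Type*} {G : SimpleGraph V} {u v : V} (hne : u ≠ v)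
    (p : G.Walk u v) (hp : p.length ≤ 2) : G.square.Adj u v := by
  rw [square_adj_iff]
  refine ⟨hne, ?_⟩
  match p, hp with
  | .nil, _ => exact absurd rfl hne
  | .cons h .nil, _ => exact Or.inl h
  | .cons h (.cons h' .nil), _ => exact Or.inr ⟨_, h, h'⟩
  | .cons _ (.cons _ (.cons _ _)), hp => simp only [Walk.length_cons] at hp; omega

/-- If every neighbour of `w` were far from `u`, then `e` would map the closed neighbourhood of `w`
injectively into the neighbourhood of `e u`, which is too small by regularity. -/
theorem exists_walk_of_far {V : Type*} [Fintype V] {G : SimpleGraph V} [DecidableRel G.Adj]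
    (e : G.square ≃g Gᶜ) {d : ℕ} (hd : ∀ v : V, G.degree v = d) {u w : V}
    (hfar : G.Adj (e u) (e w)) : ∃ p : G.Walk u w, p.length ≤ 3 := by
  classical
  obtain ⟨x, hwx, hx⟩ : ∃ x, G.Adj w x ∧ ¬ G.Adj (e u) (e x) := by
    by_contra! hall
    have hle : (insert w (G.neighborFinset w)).card ≤ (G.neighborFinset (e u)).card := by
      refine Finset.card_le_card_of_injOn e ?_ e.injective.injOn
      intro y hy
      simp only [Finset.coe_insert, Set.mem_insert_iff, Finset.mem_coe,
        mem_neighborFinset] at hy ⊢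
      rcases hy with rfl | hy
      · exact hfar
      · exact hall y hy
    rw [Finset.card_insert_of_notMem (by simp), card_neighborFinset_eq_degree,
      card_neighborFinset_eq_degree, hd, hd] at hle
    omega
  rw [adj_iff_far] at hx
  by_cases hux : u = x
  · subst hux
    exact ⟨.cons hwx.symm .nil, by simp⟩
  · obtain ⟨p, hp⟩ := exists_walk_of_square_adj (not_not.1 fun h => hx ⟨hux, h⟩)
    exact ⟨p.concat hwx.symm, by rw [Walk.length_concat]; omega⟩

theorem squco_regular_diam_three {V : Type*} [Fintype V] [Nontrivial V]
    (G : SimpleGraph V) [DecidableRel G.Adj] (hsq : Nonempty (G.square ≃g Gᶜ))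
    (hreg : ∃ d : ℕ, ∀ v : V, G.degree v = d) :
    (∀ u v : V, G.dist u v ≤ 3) ∧ ∃ u v : V, G.dist u v = 3 := by
  obtain ⟨e⟩ := hsq
  obtain ⟨d, hd⟩ := hreg
  have hwalk : ∀ u v : V, ∃ p : G.Walk u v, p.length ≤ 3 := by
    intro u v
    by_cases huv : u = v
    · subst huv
      exact ⟨.nil, by simp⟩
    by_cases hs : G.square.Adj u v
    · obtain ⟨p, hp⟩ := exists_walk_of_square_adj hs
      exact ⟨p, by omega⟩
    · exact exists_walk_of_far e hd ((adj_iff_far e u v).2 ⟨huv, hs⟩)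
  have hle : ∀ u v : V, G.dist u v ≤ 3 := fun u v =>
    let ⟨p, hp⟩ := hwalk u v
    (dist_le p).trans hp
  refine ⟨hle, ?_⟩
  obtain ⟨a, b, hab⟩ : ∃ a b, G.Adj a b := by
    by_contra! hno
    obtain ⟨x, y, hxy⟩ := exists_pair_ne V
    have h : G.square.Adj (e.symm x) (e.symm y) :=
      e.symm.map_adj_iff.2 ((compl_adj G x y).2 ⟨hxy, hno x y⟩)
    obtain ⟨-, h | ⟨z, h, -⟩⟩ := (square_adj_iff G _ _).1 h
    · exact hno _ _ h
    · exact hno _ _ h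
  refine ⟨e.symm a, e.symm b, ?_⟩
  obtain ⟨hne, hns⟩ := (adj_iff_far e (e.symm a) (e.symm b)).1 (by simpa using hab)
  refine le_antisymm (hle _ _) ?_
  -- A shortest walk exists by reachability, so the distance is not a junk value.
  obtain ⟨q, -⟩ := hwalk (e.symm a) (e.symm b)
  obtain ⟨p, hp⟩ := q.reachable.exists_walk_length_eq_dist
  rw [← hp]
  by_contra! hlt
  exact hns (square_adj_of_walk hne p (by omega))
end

section
/- The only square-complementary graphs with maximum degree at most 2 are K₁ and C₇: if G is a finite nonempty simple graph whose square is isomorphic to its complement and every vertex of G has degree at most 2, then G is isomorphic to the one-vertex graph K₁ or to the cycle graph C₇ on 7 vertices. -/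
/-!
Let `f : G.square ≃g Gᶜ`, `n` the number of vertices, `s v` the degree of `v` in `G.square`.
Comparing degrees gives `s v + deg (f v) = n - 1`, and degrees at most two give
`s v ≤ 2 * deg v ≤ 4`, so `n ≤ 7`. Moreover `G` is connected, since otherwise `G.square` would be
disconnected and `Gᶜ` connected.

Suppose `n > 1`. There are no isolated vertices, hence `s v < n - 1`: every vertex has another one
at distance at least three, and `G` contains a geodesic path `v, a, b, c`.

* If `n ≤ 5`, the one remaining vertex `e` has to be at distance at least three from both `a`
  and `b`, so it is not adjacent to any vertex of the path, contradicting connectedness.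
* If `n ≥ 6`, then `2 * deg x ≥ s x ≥ n - 3 ≥ 3`, so `G` is 2-regular and `s x = n - 3` for all `x`.
  For `n = 6` this contradicts the four vertices `v, b, c` and the other neighbour of `v` being
  within distance two of `a`. For `n = 7`, `G` is a connected 2-regular graph on seven vertices,
  that is, `C₇` (`squco_seven`).
-/

open SimpleGraph

theorem squco_card_four {V : Type*} [DecidableEq V] (p q r s : V) :
    ({p, q, r, s} : Finset V).card = 4 ↔
      p ≠ q ∧ p ≠ r ∧ p ≠ s ∧ q ≠ r ∧ q ≠ s ∧ r ≠ s := by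
  have h : ({p, q, r, s} : Finset V) = Multiset.toFinset ([p, q, r, s] : List V) := by
    ext
    simp
  have := Multiset.toFinset_card_eq_card_iff_nodup (m := (([p, q, r, s] : List V) : Multiset V))
  rw [← h] at this
  simp only [Multiset.coe_card, List.length_cons, List.length_nil, Multiset.coe_nodup] at this
  rw [show (4 : ℕ) = 0 + 1 + 1 + 1 + 1 from rfl, this]
  simp
  tauto

theorem squco_adj {V : Type*} (G : SimpleGraph V) (v w : V) :
    G.square.Adj v w ↔ v ≠ w ∧ (G.Adj v w ∨ ∃ z, G.Adj v z ∧ G.Adj z w) := by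
  simp only [SimpleGraph.square, fromRel_adj]
  refine and_congr_right fun _ => ⟨?_, Or.inl⟩
  rintro (h | h | ⟨z, h1, h2⟩)
  · exact h
  · exact Or.inl h.symm
  · exact Or.inr ⟨z, h2.symm, h1.symm⟩

/-- In a connected graph, a nonempty set of vertices closed under adjacency is everything. -/
theorem squco_closed {V : Type*} {G : SimpleGraph V} (hG : G.Preconnected) (S : Set V)
    {v : V} (hv : v ∈ S) (hS : ∀ x ∈ S, ∀ y, G.Adj x y → y ∈ S) (w : V) : w ∈ S := by
  by_contra hw
  obtain ⟨p⟩ := hG v w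
  obtain ⟨d, -, h1, h2⟩ := p.exists_boundary_dart S hv hw
  exact h2 (hS _ h1 _ d.adj)

/-- If `G` were disconnected, so would be `G.square`, hence `Gᶜ`; but the complement of a
disconnected graph is connected. -/
theorem squco_connected {V : Type*} {G : SimpleGraph V} (f : G.square ≃g Gᶜ) :
    G.Preconnected := by
  have hle : ∀ x y, G.square.Adj x y → G.Reachable x y := by
    intro x y h
    obtain ⟨-, h | ⟨z, h1, h2⟩⟩ := (squco_adj G x y).1 h
    · exact h.reachable
    · exact h1.reachable.trans h2.reachable
  have hsq : G.square.Preconnected → G.Preconnected := by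
    intro h x y
    obtain ⟨p⟩ := h x y
    induction p with
    | nil => exact Reachable.refl _
    | cons h _ ih => exact (hle _ _ h).trans ih
  rcases G.connected_or_preconnected_compl with h | h
  · exact h.preconnected
  · exact hsq (f.preconnected_iff.2 h)

open Classical in
/-- Every vertex at distance exactly two from `v` is one of the at most `deg u - 1` further
neighbours of some neighbour `u` of `v`. -/
theorem squco_degree_square_le {V : Type*} [Fintype V] (G : SimpleGraph V)
    (hdeg : ∀ v : V, G.degree v ≤ 2) (v : V) : G.square.degree v ≤ 2 * G.degree v := by
  have hsub : G.square.neighborFinset v ⊆ G.neighborFinset v ∪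
      (G.neighborFinset v).biUnion fun u => (G.neighborFinset u).erase v := by
    intro w hw
    rw [mem_neighborFinset, squco_adj] at hw
    simp only [Finset.mem_union, Finset.mem_biUnion, mem_neighborFinset, Finset.mem_erase]
    obtain ⟨hne, h | ⟨z, h1, h2⟩⟩ := hw
    · exact Or.inl h
    · exact Or.inr ⟨z, h1, hne.symm, h2⟩
  have h2 : ((G.neighborFinset v).biUnion fun u => (G.neighborFinset u).erase v).card ≤
      (G.neighborFinset v).card * 1 := by
    refine Finset.card_biUnion_le_card_mul _ _ _ fun u hu => ?_
    rw [Finset.card_erase_of_mem (by simpa [adj_comm] using hu)]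
    have := hdeg u
    rw [← card_neighborFinset_eq_degree] at this
    omega
  have h3 := (Finset.card_le_card hsub).trans (Finset.card_union_le _ _)
  simp only [card_neighborFinset_eq_degree] at h2 h3
  omega

theorem squco_other {V : Type*} [Fintype V] {G : SimpleGraph V} [DecidableRel G.Adj]
    {x a : V} (hd : G.degree x = 2) (ha : G.Adj x a) :
    ∃ b, b ≠ a ∧ ∀ y, G.Adj x y ↔ y = a ∨ y = b := by
  classical
  rw [← card_neighborFinset_eq_degree, Finset.card_eq_two] at hd
  obtain ⟨p, q, hpq, h⟩ := hd
  have h' : ∀ y, G.Adj x y ↔ y = p ∨ y = q := by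
    intro y
    rw [← mem_neighborFinset, h]
    simp
  rcases (h' a).1 ha with rfl | rfl
  · exact ⟨q, hpq.symm, h'⟩
  · exact ⟨p, hpq, fun y => by rw [h', or_comm]⟩

open Classical in
/-- On seven vertices, a connected 2-regular graph in which every vertex has four vertices
within distance two is the 7-cycle. -/
theorem squco_seven {V : Type*} [Fintype V] (G : SimpleGraph V) (hG : G.Preconnected)
    (hn : Fintype.card V = 7) (hd : ∀ v, G.degree v = 2) (hs : ∀ v, G.square.degree v = 4) :
    Nonempty (G ≃g cycleGraph 7) := by
  have hne : Nonempty V := Fintype.card_pos_iff.1 (by omega)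
  obtain ⟨x0⟩ := hne
  obtain ⟨x1, h01⟩ := (G.degree_pos_iff_exists_adj x0).1 (by rw [hd]; omega)
  obtain ⟨x6, h61, h0⟩ := squco_other (hd x0) h01
  obtain ⟨x2, h20, h1⟩ := squco_other (hd x1) h01.symm
  have h06 : G.Adj x0 x6 := (h0 _).2 (Or.inr rfl)
  obtain ⟨x5, h50, h6⟩ := squco_other (hd x6) h06.symm
  have h12 : G.Adj x1 x2 := (h1 _).2 (Or.inr rfl)
  have h65 : G.Adj x6 x5 := (h6 _).2 (Or.inr rfl)
  obtain ⟨x3, h31, h2⟩ := squco_other (hd x2) h12.symm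
  obtain ⟨x4, h46, h5⟩ := squco_other (hd x5) h65.symm
  -- `x1, x6, x2, x5` exhaust the square neighbourhood of `x0`, so they are distinct
  have hcard : ({x1, x6, x2, x5} : Finset V).card = 4 := by
    apply le_antisymm Finset.card_le_four
    rw [← hs x0, ← card_neighborFinset_eq_degree]
    refine Finset.card_le_card fun y hy => ?_
    rw [mem_neighborFinset, squco_adj] at hy
    simp only [Finset.mem_insert, Finset.mem_singleton]
    grind
  obtain ⟨n16, n12, n15, n62, n65, n25⟩ := (squco_card_four _ _ _ _).1 hcard
  have n01 := h01.ne
  have n06 := h06.ne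
  -- a proper set of at most six vertices is not closed under adjacency
  have hproper : ∀ S : Finset V, S.card ≤ 6 → x0 ∈ S →
      (∀ x ∈ S, ∀ y, G.Adj x y → y ∈ S) → False := by
    intro S hS h0S hcl
    have : S = Finset.univ := by
      ext w
      simpa using squco_closed hG (S : Set V) (by simpa using h0S) (by simpa using hcl) w
    rw [this, Finset.card_univ] at hS
    omega
  have h23 : G.Adj x2 x3 := (h2 _).2 (Or.inr rfl)
  have h54 : G.Adj x5 x4 := (h5 _).2 (Or.inr rfl)
  have n35 : x3 ≠ x5 := by
    rintro rfl
    refine hproper {x0, x1, x2, x3, x6} (Finset.card_le_five.trans (by omega)) (by simp) ?_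
    have h32 := (h5 x2).1 h23.symm
    simp only [Finset.mem_insert, Finset.mem_singleton]
    grind
  have n30 : x3 ≠ x0 := by
    rintro rfl
    have := (h0 x2).1 h23.symm
    grind
  have n36 : x3 ≠ x6 := by
    rintro rfl
    have := (h6 x2).1 h23.symm
    grind
  have n40 : x4 ≠ x0 := by
    rintro rfl
    have := (h0 x5).1 h54.symm
    grind
  have n41 : x4 ≠ x1 := by
    rintro rfl
    have := (h1 x5).1 h54.symm
    grind
  have n42 : x4 ≠ x2 := by
    rintro rfl
    have := (h2 x5).1 h54.symm
    grind
  have n32 := h23.ne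
  have n45 := h54.ne
  obtain ⟨y, hy2, h3⟩ := squco_other (hd x3) h23.symm
  have n34 : x3 ≠ x4 := by
    rintro rfl
    refine hproper {x0, x1, x2, x3, x5, x6} Finset.card_le_six (by simp) ?_
    have := (h3 x5).1 h54.symm
    simp only [Finset.mem_insert, Finset.mem_singleton]
    grind
  have hinj : Function.Injective ![x0, x1, x2, x3, x4, x5, x6] := by
    have : [x0, x1, x2, x3, x4, x5, x6].Nodup := by
      simp
      grind
    exact List.nodup_ofFn.1 (by simpa using this)
  have hbij : Function.Bijective ![x0, x1, x2, x3, x4, x5, x6] :=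
    (Fintype.bijective_iff_injective_and_card _).2 ⟨hinj, by simp [hn]⟩
  -- the other neighbour of `x3` can only be `x4`, all others having two neighbours already
  have hy : y = x4 := by
    have h3y := (h3 y).2 (Or.inr rfl)
    obtain ⟨i, hi⟩ := hbij.2 y
    fin_cases i <;> simp at hi <;> grind [G.adj_comm, G.irrefl]
  subst hy
  obtain ⟨z, hz, h4⟩ := squco_other (hd y) h54.symm
  have hz3 := (h4 x3).1 ((h3 y).2 (Or.inr rfl)).symm
  have hz3' : z = x3 := by grind
  subst hz3'
  refine ⟨(RelIso.mk (Equiv.ofBijective _ hbij) ?_ : cycleGraph 7 ≃g G).symm⟩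
  intro i j
  have hiff : ∀ j, G.Adj (![x0, x1, x2, z, y, x5, x6] i) (![x0, x1, x2, z, y, x5, x6] j) ↔
      j = i - 1 ∨ j = i + 1 := by
    intro j
    rw [← hinj.eq_iff, ← hinj.eq_iff (a := j) (b := i + 1)]
    fin_cases i <;> simp [h0, h1, h2, h3, h4, h5, h6] <;> grind
  have hc : (cycleGraph 7).Adj i j ↔ j = i - 1 ∨ j = i + 1 := by
    rw [← mem_neighborSet, cycleGraph_neighborSet]
    simp
  rw [hc, ← hiff]
  rfl

theorem squco_max_degree_le_two {V : Type*} [Fintype V] [Nonempty V]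
    (G : SimpleGraph V) [DecidableRel G.Adj] (hsq : Nonempty (G.square ≃g Gᶜ))
    (hdeg : ∀ v : V, G.degree v ≤ 2) :
    Nonempty (G ≃g (⊥ : SimpleGraph (Fin 1))) ∨ Nonempty (G ≃g cycleGraph 7) := by
  classical
  obtain ⟨f⟩ := hsq
  have hG := squco_connected f
  rcases Nat.lt_or_ge 1 (Fintype.card V) with hn | hn
  swap
  · left
    have : Subsingleton V := Fintype.card_le_one_iff_subsingleton.1 hn
    obtain ⟨v⟩ := ‹Nonempty V›
    have : Unique V := uniqueOfSubsingleton v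
    refine ⟨⟨Equiv.ofUnique V (Fin 1), ?_⟩⟩
    intro a b
    simp [Subsingleton.elim a b]
  right
  have : Nontrivial V := Fintype.one_lt_card_iff_nontrivial.1 hn
  have hpos : ∀ v, 0 < G.degree v := fun v => hG.degree_pos_of_nontrivial v
  have hcount : ∀ v, G.square.degree v + G.degree (f v) + 1 = Fintype.card V := by
    intro v
    have h1 : Gᶜ.degree (f v) = G.square.degree v := f.degree_eq v
    rw [degree_compl] at h1
    have := G.degree_lt_card_verts (f v)
    omega
  have hle : ∀ v, G.square.degree v ≤ 2 * G.degree v := by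
    intro v
    convert squco_degree_square_le G (fun v => by convert hdeg v) v
  -- a vertex at distance at least three
  have hfar : ∀ v, ∃ w, v ≠ w ∧ ¬ G.square.Adj v w := by
    intro v
    by_contra! h
    have : (Finset.univ.erase v).card ≤ (G.square.neighborFinset v).card :=
      Finset.card_le_card fun w hw => by
        simpa using h w (Finset.ne_of_mem_erase hw).symm
    rw [Finset.card_erase_of_mem (Finset.mem_univ _), Finset.card_univ,
      card_neighborFinset_eq_degree] at this
    have := hcount v
    have := hpos (f v)
    omega
  -- an induced path `v, a, b, c` with `v` and `c` at distance three
  obtain ⟨v, a, b, c, hva, hab, hbc, hvb, hvc⟩ : ∃ v a b c, G.Adj v a ∧ G.Adj a b ∧ G.Adj b c ∧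
      v ≠ b ∧ (v ≠ c ∧ ¬ G.square.Adj v c) := by
    obtain ⟨v⟩ := ‹Nonempty V›
    obtain ⟨w, hvw, hw⟩ := hfar v
    by_contra! hcon
    have := squco_closed hG {x | v = x ∨ G.square.Adj v x} (Or.inl rfl) (by
      intro x hx y hxy
      simp only [Set.mem_ofPred_eq, squco_adj] at hx hcon ⊢
      by_cases hvy : v = y
      · exact Or.inl hvy
      right
      refine ⟨hvy, ?_⟩
      rcases hx with rfl | ⟨hvx, h | ⟨z, h1, h2⟩⟩
      · exact Or.inl hxy
      · exact Or.inr ⟨x, h, hxy⟩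
      · exact (hcon v z x y h1 h2 hxy hvx hvy).2) w
    rcases this with h | h
    · exact hvw h
    · exact hw h
  rw [squco_adj] at hvc
  have hdist : a ≠ c := by
    rintro rfl
    exact hvc.2 ⟨hvc.1, Or.inl hva⟩
  have h4 : ({v, a, b, c} : Finset V).card = 4 :=
    (squco_card_four _ _ _ _).2 ⟨hva.ne, hvb, hvc.1, hab.ne, hdist, hbc.ne⟩
  have hub : Fintype.card V ≤ 7 := by
    have := hcount v
    have := hle v
    have := hdeg v
    have := hdeg (f v)
    omega
  have hlb : 6 ≤ Fintype.card V := by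
    by_contra! hlt
    obtain ⟨e, hae, he⟩ := hfar a
    obtain ⟨e', hbe, he'⟩ := hfar b
    rw [squco_adj] at he he'
    have hmem : ∀ x, x = v ∨ x = a ∨ x = b ∨ x = c ∨ x = e := by
      have hnotin : e ∉ ({v, a, b, c} : Finset V) := by
        simp only [Finset.mem_insert, Finset.mem_singleton]
        grind [G.adj_comm]
      have huniv : insert e ({v, a, b, c} : Finset V) = Finset.univ := by
        rw [← Finset.card_eq_iff_eq_univ]
        have h5 := Finset.card_insert_of_notMem hnotin
        have := Finset.card_le_univ (insert e ({v, a, b, c} : Finset V))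
        omega
      intro x
      have := Finset.mem_univ x
      rw [← huniv] at this
      simp only [Finset.mem_insert, Finset.mem_singleton] at this
      tauto
    have hee : e' = e := by
      have := hmem e'
      grind [G.adj_comm]
    subst hee
    obtain ⟨x, hx⟩ := (G.degree_pos_iff_exists_adj e').1 (hpos e')
    have := hmem x
    grind [G.adj_comm, G.irrefl]
  have hd : ∀ x, G.degree x = 2 := by
    intro x
    have := hcount x
    have := hdeg (f x)
    have := hle x
    have := hdeg x
    omega
  have hs : ∀ x, G.square.degree x = Fintype.card V - 3 := by
    intro x
    have := hcount x
    have := hd (f x)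
    omega
  have h7 : Fintype.card V = 7 := by
    by_contra h7
    -- `a` would have the four square neighbours `v, b, c, y`, with `y` the other neighbour of `v`
    obtain ⟨y, hya, hy⟩ := squco_other (hd v) hva
    have hvy := (hy y).2 (Or.inr rfl)
    have := hs a
    have : ({v, b, c, y} : Finset V).card ≤ (G.square.neighborFinset a).card := by
      refine Finset.card_le_card fun w hw => ?_
      rw [mem_neighborFinset, squco_adj]
      simp only [Finset.mem_insert, Finset.mem_singleton] at hw
      grind [G.adj_comm, G.irrefl]
    have hyb : y ≠ b := by
      rintro rfl
      exact hvc.2 ⟨hvc.1, Or.inr ⟨y, hvy, hbc⟩⟩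
    have hyc : y ≠ c := by
      rintro rfl
      exact hvc.2 ⟨hvc.1, Or.inl hvy⟩
    rw [(squco_card_four v b c y).2 ⟨hvb, hvc.1, hvy.ne, hbc.ne, hyb.symm, hyc.symm⟩,
      card_neighborFinset_eq_degree] at this
    omega
  exact squco_seven G hG h7 (fun v => by convert hd v) (fun v => by convert hs v; omega)
end
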